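/- Let N₁ : ℝ → ℝ satisfy N₁(G) ≥ 2 for all large G and ∫₂^{N₁(G)} (−P(t)) dt = a·G + O(1) as G → ∞. Let g : ℝ → ℝ satisfy g(T) − T ∼ (1−c)·T/ln T as T → ∞, and assume the prime number theorem in the form π(ρ) ∼ ρ/ln ρ as ρ → ∞. Then the following two statements are equivalent: (A) for all positive integers x, y, z and every integer n ≥ 3, writing F = (xⁿ + yⁿ)/zⁿ, one has lim_{ρ→∞} (1/π(ρ)) · ∫_{N₁(Fρ/(a(1−c)))}^{N₁(g(Fρ/(a(1−c))))} (−P(t)) dt ≠ 1; (B) for all positive integers x, y, z and every integer n ≥ 3, xⁿ + yⁿ ≠ zⁿ (the Fermat–Wiles theorem). -/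

import Mathlib

/-!
The limit occurring in the first condition always exists and equals the Fermat rational
`F = (x ^ n + y ^ n) / z ^ n` itself. Indeed, subtracting the asymptotic formula for the primitive
of `-P` at `T` from the one at `g T` gives
`∫ t in N₁ T..N₁ (g T), -P t = a * (g T - T) + O(1) ∼ a * (1 - c) * T / log T`
(`tendsto_ladder_integral`), and with `T = F * ρ / (a * (1 - c))` the right-hand side is
`∼ F * ρ / log ρ ∼ F * π(ρ)`, since `log (k * ρ) ∼ log ρ` for fixed `k > 0`.
Hence the limit is different from `1` exactly when `x ^ n + y ^ n ≠ z ^ n`.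
-/

open Filter Real Asymptotics MeasureTheory

noncomputable def pichar (t : ℝ) : ℝ := (Nat.primeCounting ⌊t⌋₊ : ℝ)

noncomputable def P (t : ℝ) : ℝ := pichar t - ∫ u in (2:ℝ)..t, 1 / Real.log u

noncomputable def a : ℝ := Real.exp 4.5

noncomputable def c : ℝ := Real.eulerMascheroniConstant

noncomputable def Z (t : ℝ) : ℝ := ‖riemannZeta (1/2 + (t : ℂ) * Complex.I)‖ ^ 2

lemma c_lt_one : c < 1 := by
  have := Real.eulerMascheroniConstant_lt_two_thirds
  unfold c
  linarith

lemma a_pos : 0 < a := Real.exp_pos _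

lemma intervalIntegrable_neg_P {b : ℝ} (hb : 2 ≤ b) :
    IntervalIntegrable (fun t => -P t) volume 2 b := by
  have hmono : Monotone pichar := fun s t hst =>
    Nat.cast_le.mpr (Nat.monotone_primeCounting (Nat.floor_mono hst))
  have hlog : IntervalIntegrable (fun u : ℝ => 1 / Real.log u) volume 2 b := by
    apply ContinuousOn.intervalIntegrable
    rw [Set.uIcc_of_le hb]
    intro u hu
    have h2 : (2 : ℝ) ≤ u := hu.1
    have hne : Real.log u ≠ 0 := (Real.log_pos (by linarith)).ne'
    exact (continuousAt_const.div (Real.continuousAt_log (by linarith)) hne).continuousWithinAt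
  have hprim : ContinuousOn (fun t : ℝ => ∫ u in (2 : ℝ)..t, 1 / Real.log u) (Set.uIcc 2 b) :=
    intervalIntegral.continuousOn_primitive_interval' hlog Set.left_mem_uIcc
  exact (hmono.intervalIntegrable.sub hprim.intervalIntegrable).neg

lemma tendsto_div_log_atTop : Tendsto (fun T : ℝ => T / Real.log T) atTop atTop := by
  have h := Real.isLittleO_log_id_atTop.tendsto_div_nhds_zero
  have h' : Tendsto (fun T : ℝ => Real.log T / T) atTop (nhdsWithin 0 (Set.Ioi 0)) := by
    refine tendsto_nhdsWithin_iff.mpr ⟨h, ?_⟩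
    filter_upwards [eventually_gt_atTop 1] with T hT
    exact div_pos (Real.log_pos hT) (by linarith)
  refine h'.inv_tendsto_nhdsGT_zero.congr fun T => ?_
  simp

/-- A positive dilation does not change the logarithm asymptotically. -/
lemma tendsto_log_div_log_mul {k : ℝ} (hk : 0 < k) :
    Tendsto (fun ρ : ℝ => Real.log ρ / Real.log (k * ρ)) atTop (nhds 1) := by
  have h0 : Tendsto (fun ρ : ℝ => Real.log k / Real.log ρ) atTop (nhds 0) :=
    tendsto_const_nhds.div_atTop Real.tendsto_log_atTop
  have h1 : Tendsto (fun ρ : ℝ => (Real.log k / Real.log ρ + 1)⁻¹) atTop (nhds 1) := by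
    simpa using (h0.add_const 1).inv₀ (by norm_num)
  refine h1.congr' ?_
  filter_upwards [eventually_gt_atTop 1] with ρ hρ
  have hl : Real.log ρ ≠ 0 := (Real.log_pos hρ).ne'
  rw [Real.log_mul hk.ne' (by linarith), div_add_one hl, inv_div]

/-- The integral of `-P` over one step of the ladder is asymptotic to `a * (1 - c) * T / log T`. -/
lemma tendsto_ladder_integral (N₁ : ℝ → ℝ)
    (hN2 : ∀ᶠ G in atTop, 2 ≤ N₁ G)
    (hN : (fun G => (∫ t in (2:ℝ)..N₁ G, -P t) - a * G) =O[atTop] (fun _ => (1:ℝ)))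
    (g : ℝ → ℝ)
    (hg1 : (fun T => g T - T) ~[atTop] (fun T => (1 - c) * T / Real.log T)) :
    Tendsto (fun T => (∫ t in N₁ T..N₁ (g T), -P t) / (T / Real.log T)) atTop
      (nhds (a * (1 - c))) := by
  have hc : 0 < 1 - c := sub_pos.mpr c_lt_one
  have hpos : ∀ᶠ T : ℝ in atTop, 0 < T / Real.log T :=
    tendsto_div_log_atTop.eventually_gt_atTop 0
  have hquot : Tendsto (fun T => (g T - T) / (T / Real.log T)) atTop (nhds (1 - c)) := by
    have h := (isEquivalent_iff_tendsto_one (by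
      filter_upwards [hpos] with T hT
      rw [mul_div_assoc]
      exact (mul_pos hc hT).ne')).mp hg1
    have h2 := h.const_mul (1 - c)
    rw [mul_one] at h2
    refine h2.congr' ?_
    filter_upwards [hpos] with T hT
    simp only [Pi.div_apply]
    rw [mul_div_assoc (1 - c) T]
    field_simp
  have hgT : Tendsto g atTop atTop := by
    refine tendsto_atTop_mono' _ ?_ tendsto_id
    filter_upwards [hpos, hquot.eventually_const_lt hc] with T hT hq
    have := (div_pos_iff_of_pos_right hT).mp hq
    simp only [id]
    linarith
  have hone : (fun _ : ℝ => (1 : ℝ)) =o[atTop] (fun T : ℝ => T / Real.log T) :=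
    (isLittleO_const_left.mpr (Or.inr (tendsto_norm_atTop_atTop.comp tendsto_div_log_atTop)))
  have hE := (hN.trans_isLittleO hone).tendsto_div_nhds_zero
  have hEg := ((hN.comp_tendsto hgT).trans_isLittleO hone).tendsto_div_nhds_zero
  have hsum := ((hquot.const_mul a).add hEg).sub hE
  rw [add_zero, sub_zero] at hsum
  refine hsum.congr' ?_
  filter_upwards [hN2, hgT.eventually hN2] with T h1 h2
  rw [← intervalIntegral.integral_interval_sub_left (intervalIntegrable_neg_P h2)
    (intervalIntegrable_neg_P h1)]
  simp only [Function.comp]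
  ring

/-- The limit in the first condition equals the parameter `F`, for every `F > 0`. -/
lemma tendsto_prime_quotient (N₁ : ℝ → ℝ)
    (hN2 : ∀ᶠ G in atTop, 2 ≤ N₁ G)
    (hN : (fun G => (∫ t in (2:ℝ)..N₁ G, -P t) - a * G) =O[atTop] (fun _ => (1:ℝ)))
    (g : ℝ → ℝ)
    (hg1 : (fun T => g T - T) ~[atTop] (fun T => (1 - c) * T / Real.log T))
    (hPNT : (fun ρ => pichar ρ) ~[atTop] (fun ρ => ρ / Real.log ρ))
    {F : ℝ} (hF : 0 < F) :
    Tendsto (fun ρ => (1 / pichar ρ) *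
      ∫ t in N₁ (F * ρ / (a * (1 - c)))..N₁ (g (F * ρ / (a * (1 - c)))), -P t)
      atTop (nhds F) := by
  have hac : 0 < a * (1 - c) := mul_pos a_pos (sub_pos.mpr c_lt_one)
  have hk : 0 < F / (a * (1 - c)) := div_pos hF hac
  set k := F / (a * (1 - c)) with hkdef
  have hkρ : Tendsto (fun ρ : ℝ => k * ρ) atTop atTop := tendsto_id.const_mul_atTop hk
  have hJ := (tendsto_ladder_integral N₁ hN2 hN g hg1).comp hkρ
  have hpi : Tendsto (fun ρ : ℝ => ρ / Real.log ρ / pichar ρ) atTop (nhds 1) := by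
    have h := (isEquivalent_iff_tendsto_one (by
      filter_upwards [tendsto_div_log_atTop.eventually_gt_atTop 0] with T hT
      exact hT.ne')).mp hPNT
    have h2 := h.inv₀ one_ne_zero
    rw [inv_one] at h2
    refine h2.congr fun ρ => ?_
    simp
  have hlim := ((hJ.mul_const k).mul (tendsto_log_div_log_mul hk)).mul hpi
  have hval : a * (1 - c) * k * 1 * 1 = F := by
    rw [mul_one, mul_one, hkdef, mul_div_cancel₀ _ hac.ne']
  rw [hval] at hlim
  refine hlim.congr' ?_
  filter_upwards [eventually_gt_atTop 1, hkρ.eventually_gt_atTop 1] with ρ h1 h2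
  have hl1 : Real.log ρ ≠ 0 := (Real.log_pos h1).ne'
  have hl2 : Real.log (k * ρ) ≠ 0 := (Real.log_pos h2).ne'
  have hρ : ρ ≠ 0 := by linarith
  have hT : F * ρ / (a * (1 - c)) = k * ρ := by rw [hkdef]; ring
  rw [hT]
  simp only [Function.comp]
  generalize (∫ t in N₁ (k * ρ)..N₁ (g (k * ρ)), -P t) = J
  have hk0 := hk.ne'
  clear_value k
  field_simp

/-- Theorem 6: the second `Pζ`-condition on the set of all Fermat rationals is
equivalent to the Fermat–Wiles theorem. -/
theorem stmt_13 (N₁ : ℝ → ℝ)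
    (hN2 : ∀ᶠ G in atTop, 2 ≤ N₁ G)
    (hN : (fun G => (∫ t in (2:ℝ)..N₁ G, -P t) - a * G) =O[atTop] (fun _ => (1:ℝ)))
    (g : ℝ → ℝ)
    (hg1 : (fun T => g T - T) ~[atTop] (fun T => (1 - c) * T / Real.log T))
    (hPNT : (fun ρ => pichar ρ) ~[atTop] (fun ρ => ρ / Real.log ρ)) :
    (∀ x y z n : ℕ, 0 < x → 0 < y → 0 < z → 3 ≤ n →
      ¬ Tendsto (fun ρ => (1 / pichar ρ) *
        ∫ t in N₁ (((x ^ n + y ^ n : ℝ) / (z ^ n : ℝ)) * ρ / (a * (1 - c)))..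
          N₁ (g (((x ^ n + y ^ n : ℝ) / (z ^ n : ℝ)) * ρ / (a * (1 - c)))), -P t)
        atTop (nhds 1)) ↔
    (∀ x y z n : ℕ, 0 < x → 0 < y → 0 < z → 3 ≤ n → x ^ n + y ^ n ≠ z ^ n) := by
  have key : ∀ x y z n : ℕ, 0 < x → 0 < y → 0 < z →
      (¬ Tendsto (fun ρ => (1 / pichar ρ) *
        ∫ t in N₁ (((x ^ n + y ^ n : ℝ) / (z ^ n : ℝ)) * ρ / (a * (1 - c)))..
          N₁ (g (((x ^ n + y ^ n : ℝ) / (z ^ n : ℝ)) * ρ / (a * (1 - c)))), -P t)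
        atTop (nhds 1) ↔ x ^ n + y ^ n ≠ z ^ n) := by
    intro x y z n hx hy hz
    have hx' : (0 : ℝ) < x := Nat.cast_pos.mpr hx
    have hy' : (0 : ℝ) < y := Nat.cast_pos.mpr hy
    have hz' : (0 : ℝ) < z := Nat.cast_pos.mpr hz
    have hlim := tendsto_prime_quotient N₁ hN2 hN g hg1 hPNT
      (F := (x ^ n + y ^ n : ℝ) / (z ^ n : ℝ)) (by positivity)
    have hF : (x ^ n + y ^ n : ℝ) / (z ^ n : ℝ) = 1 ↔ x ^ n + y ^ n = z ^ n := by
      rw [div_eq_one_iff_eq (by positivity)]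
      exact_mod_cast Iff.rfl
    refine not_congr (Iff.trans ⟨fun h => tendsto_nhds_unique hlim h, fun h => ?_⟩ hF)
    have h1 := hlim
    rwa [show nhds ((x ^ n + y ^ n : ℝ) / (z ^ n : ℝ)) = nhds 1 by rw [h]] at h1
  exact ⟨fun h x y z n hx hy hz hn => (key x y z n hx hy hz).mp (h x y z n hx hy hz hn),
    fun h x y z n hx hy hz hn => (key x y z n hx hy hz).mpr (h x y z n hx hy hz hn)⟩
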